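/- arXiv:2508.11533 — 3 statements merged into one kernel-verified Lean document; each statement's English description precedes it below -/
import Mathlib

section
/- Petersen's lemma (strict version): Let 𝐂 ∈ ℝ^{n×n} be symmetric, 𝐌 ∈ ℝ^{n×p}, 𝐃̄ ∈ ℝ^{q×q} symmetric positive semidefinite, and 𝐍 ∈ ℝ^{n×q}. Then 𝐂 + 𝐌𝐃𝐍ᵀ + 𝐍𝐃ᵀ𝐌ᵀ ≺ 0 holds for every 𝐃 ∈ ℝ^{p×q} with 𝐃ᵀ𝐃 ⪯ 𝐃̄ if and only if there exists a scalar μ > 0 such that 𝐂 + μ𝐌𝐌ᵀ + μ⁻¹𝐍𝐃̄𝐍ᵀ ≺ 0. -/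
open Matrix

/-- quadratic form of a matrix -/
def qfm {n : ℕ} (A : Matrix (Fin n) (Fin n) ℝ) (x : Fin n → ℝ) : ℝ := x ⬝ᵥ (A *ᵥ x)

lemma qfm_cont {n : ℕ} (A : Matrix (Fin n) (Fin n) ℝ) : Continuous (qfm A) := by
  unfold qfm
  fun_prop

lemma qfm_expand {n : ℕ} (A : Matrix (Fin n) (Fin n) ℝ) (x y : Fin n → ℝ) (s t : ℝ) :
    qfm A (s • x + t • y) = s ^ 2 * qfm A x + s * t * (x ⬝ᵥ (A *ᵥ y) + y ⬝ᵥ (A *ᵥ x))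
      + t ^ 2 * qfm A y := by
  unfold qfm
  simp only [mulVec_add, mulVec_smul, dotProduct_add, add_dotProduct, smul_dotProduct,
    dotProduct_smul, smul_eq_mul]
  ring

lemma qfm_smul {n : ℕ} (A : Matrix (Fin n) (Fin n) ℝ) (x : Fin n → ℝ) (s : ℝ) :
    qfm A (s • x) = s ^ 2 * qfm A x := by
  have := qfm_expand A x x s 0
  simpa using this

/-- two-dimensional argument -/
lemma pair_lemma {n : ℕ} (A B C : Matrix (Fin n) (Fin n) ℝ)
    (hA : ∀ x, 0 ≤ qfm A x)
    (h : ∀ x, x ≠ 0 → 0 < qfm C x ∧ 4 * qfm A x * qfm B x < (qfm C x) ^ 2)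
    (m : ℝ) (x y : Fin n → ℝ) (hx : x ≠ 0) (hy : y ≠ 0)
    (hQx : 0 ≤ m ^ 2 * qfm A x - m * qfm C x + qfm B x)
    (hQy : 0 ≤ m ^ 2 * qfm A y - m * qfm C y + qfm B y)
    (hdx : 2 * m * qfm A x ≤ qfm C x) (hdy : qfm C y ≤ 2 * m * qfm A y) : False := by
  -- no zero of the derivative
  have key : ∀ z, z ≠ 0 → 0 ≤ m ^ 2 * qfm A z - m * qfm C z + qfm B z →
      2 * m * qfm A z = qfm C z → False := by
    intro z hz hQ hd
    have h1 := (h z hz).2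
    rw [← hd] at h1 hQ
    have h2 : 0 ≤ qfm B z - m ^ 2 * qfm A z := by linarith
    nlinarith [mul_nonneg (hA z) h2]
  -- sign choice
  wlog hs : 0 ≤ m ^ 2 * (x ⬝ᵥ (A *ᵥ y) + y ⬝ᵥ (A *ᵥ x))
      - m * (x ⬝ᵥ (C *ᵥ y) + y ⬝ᵥ (C *ᵥ x)) + (x ⬝ᵥ (B *ᵥ y) + y ⬝ᵥ (B *ᵥ x)) generalizing y
  · have hn : ∀ X : Matrix (Fin n) (Fin n) ℝ, qfm X (-y) = qfm X y := by
      intro X; simpa using qfm_smul X y (-1)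
    refine this (-y) (neg_ne_zero.2 hy) (by simpa only [hn] using hQy)
      (by simpa only [hn] using hdy) ?_
    simp only [mulVec_neg, dotProduct_neg, neg_dotProduct]
    push Not at hs
    linarith
  have hcont : ContinuousOn (fun t : ℝ => 2 * m * qfm A ((1 - t) • x + t • y)
      - qfm C ((1 - t) • x + t • y)) (Set.Icc 0 1) := by
    have := qfm_cont A
    have := qfm_cont C
    fun_prop
  have hmem : (0 : ℝ) ∈ Set.Icc (2 * m * qfm A ((1 - (0:ℝ)) • x + (0:ℝ) • y)
      - qfm C ((1 - (0:ℝ)) • x + (0:ℝ) • y)) (2 * m * qfm A ((1 - (1:ℝ)) • x + (1:ℝ) • y)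
      - qfm C ((1 - (1:ℝ)) • x + (1:ℝ) • y)) := by
    constructor
    · simpa using hdx
    · simpa using hdy
  obtain ⟨t, ⟨ht0, ht1⟩, ht⟩ := intermediate_value_Icc zero_le_one hcont hmem
  simp only at ht
  by_cases hz : (1 - t) • x + t • y = 0
  · -- dependent
    rcases eq_or_lt_of_le ht0 with h0 | h0
    · rw [← h0] at hz
      apply hx; simpa using hz
    have hyx : y = (-(t⁻¹ * (1 - t))) • x := by
      have : t • y = -((1 - t) • x) := by
        rw [add_comm] at hz
        exact eq_neg_of_add_eq_zero_left hz
      calc y = t⁻¹ • (t • y) := by rw [smul_smul, inv_mul_cancel₀ h0.ne', one_smul]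
        _ = _ := by rw [this, smul_neg, smul_smul, neg_smul]
    set r := -(t⁻¹ * (1 - t)) with hr
    have hr0 : r ≠ 0 := by
      intro h0; apply hy; rw [hyx, h0, zero_smul]
    have hr2 : 0 < r ^ 2 := by positivity
    rw [hyx, qfm_smul, qfm_smul] at hdy
    have : qfm C x ≤ 2 * m * qfm A x := by
      by_contra hcon
      push Not at hcon
      nlinarith [mul_lt_mul_of_pos_left hcon hr2]
    exact key x hx hQx (le_antisymm hdx this)
  · refine key _ hz ?_ (by linarith)
    simp only [qfm_expand]
    have e1 := mul_nonneg (sq_nonneg (1 - t)) hQx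
    have e2 := mul_nonneg (mul_nonneg (sub_nonneg.2 ht1) ht0) hs
    have e3 := mul_nonneg (sq_nonneg t) hQy
    linarith

lemma closed_proj {n : ℕ} (F : ℝ → (Fin n → ℝ) → ℝ) (G : ℝ → (Fin n → ℝ) → ℝ)
    (hF : Continuous (Function.uncurry F)) (hG : Continuous (Function.uncurry G)) :
    IsClosed {m : ℝ | ∃ x ∈ Metric.sphere (0 : Fin n → ℝ) 1, 0 ≤ F m x ∧ 0 ≤ G m x} := by
  have hc : IsClosed {p : ℝ × Metric.sphere (0 : Fin n → ℝ) 1 | 0 ≤ F p.1 p.2 ∧ 0 ≤ G p.1 p.2} := by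
    refine IsClosed.inter ?_ ?_
    · exact isClosed_le continuous_const
        (hF.comp (continuous_fst.prodMk (continuous_subtype_val.comp continuous_snd)))
    · exact isClosed_le continuous_const
        (hG.comp (continuous_fst.prodMk (continuous_subtype_val.comp continuous_snd)))
  have := isClosedMap_fst_of_compactSpace _ hc
  convert this using 1
  ext m
  constructor
  · rintro ⟨x, hx, h⟩
    exact ⟨(m, ⟨x, hx⟩), h, rfl⟩
  · rintro ⟨⟨m', x⟩, h, rfl⟩
    exact ⟨x, x.2, h⟩

lemma ratio_bound {n : ℕ} (A C : Matrix (Fin n) (Fin n) ℝ)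
    (h : ∀ x, x ≠ 0 → 0 < qfm C x) :
    ∃ K : ℝ, ∀ x ∈ Metric.sphere (0 : Fin n → ℝ) 1, qfm A x ≤ K * qfm C x := by
  have hne : ∀ x ∈ Metric.sphere (0 : Fin n → ℝ) 1, 0 < qfm C x := fun x hx =>
    h x (ne_zero_of_mem_unit_sphere ⟨x, hx⟩)
  have hc : ContinuousOn (fun x => qfm A x / qfm C x) (Metric.sphere (0 : Fin n → ℝ) 1) :=
    (qfm_cont A).continuousOn.div (qfm_cont C).continuousOn (fun x hx => (hne x hx).ne')
  obtain ⟨K, hK⟩ := (isCompact_sphere (0 : Fin n → ℝ) 1).bddAbove_image hc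
  refine ⟨K, fun x hx => ?_⟩
  have := hK (Set.mem_image_of_mem _ hx)
  exact (div_le_iff₀ (hne x hx)).1 this

lemma key_lemma {n : ℕ} (A B C : Matrix (Fin n) (Fin n) ℝ)
    (hA : ∀ x, 0 ≤ qfm A x)
    (h : ∀ x, x ≠ 0 → 0 < qfm C x ∧ 4 * qfm A x * qfm B x < (qfm C x) ^ 2) :
    ∃ m : ℝ, 0 < m ∧ ∀ x, x ≠ 0 → m ^ 2 * qfm A x - m * qfm C x + qfm B x < 0 := by
  have hne : ∀ x ∈ Metric.sphere (0 : Fin n → ℝ) 1, x ≠ 0 := fun x hx =>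
    ne_zero_of_mem_unit_sphere ⟨x, hx⟩
  obtain ⟨K1, hK1⟩ := ratio_bound A C (fun x hx => (h x hx).1)
  obtain ⟨K2, hK2⟩ := ratio_bound B C (fun x hx => (h x hx).1)
  obtain ⟨K, hK, hKA, hKB⟩ : ∃ K : ℝ, 1 ≤ K ∧
      (∀ x ∈ Metric.sphere (0 : Fin n → ℝ) 1, qfm A x < K * qfm C x) ∧
      (∀ x ∈ Metric.sphere (0 : Fin n → ℝ) 1, qfm B x < K * qfm C x) := by
    refine ⟨|K1| + |K2| + 1, by linarith [abs_nonneg K1, abs_nonneg K2], ?_, ?_⟩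
    · intro x hx
      have := (h x (hne x hx)).1
      have h1 := hK1 x hx
      have h2 := le_abs_self K1
      have h3 := abs_nonneg K2
      nlinarith
    · intro x hx
      have := (h x (hne x hx)).1
      have h1 := hK2 x hx
      have h2 := le_abs_self K2
      have h3 := abs_nonneg K1
      nlinarith
  have hK0 : 0 < K := by linarith
  by_contra hcon
  push Not at hcon
  have bad : ∀ m : ℝ, 0 < m → ∃ x ∈ Metric.sphere (0 : Fin n → ℝ) 1,
      0 ≤ m ^ 2 * qfm A x - m * qfm C x + qfm B x := by
    intro m hm
    obtain ⟨x, hx, hq⟩ := hcon m hm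
    refine ⟨‖x‖⁻¹ • x, ?_, ?_⟩
    · have : ‖x‖ ≠ 0 := norm_ne_zero_iff.2 hx
      simp [norm_smul, this]
    · simp only [qfm_smul]
      have := mul_nonneg (sq_nonneg ‖x‖⁻¹) hq
      linarith
  have cA := qfm_cont A
  have cB := qfm_cont B
  have cC := qfm_cont C
  have hL := closed_proj (n := n) (fun m x => m ^ 2 * qfm A x - m * qfm C x + qfm B x)
    (fun m x => qfm C x - 2 * m * qfm A x) (by unfold Function.uncurry; fun_prop)
    (by unfold Function.uncurry; fun_prop)
  have hR := closed_proj (n := n) (fun m x => m ^ 2 * qfm A x - m * qfm C x + qfm B x)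
    (fun m x => 2 * m * qfm A x - qfm C x) (by unfold Function.uncurry; fun_prop)
    (by unfold Function.uncurry; fun_prop)
  have hconn := isPreconnected_closed_iff.1 (isPreconnected_Ioi (a := (0:ℝ))) _ _ hL hR
  refine Exists.elim (hconn ?_ ?_ ?_) ?_
  rotate_left 3
  · rintro m ⟨hm, ⟨x, hx, hx1, hx2⟩, ⟨y, hy, hy1, hy2⟩⟩
    exact pair_lemma A B C hA h m x y (hne x hx) (hne y hy) hx1 hy1 (by linarith) (by linarith)
  · intro m hm
    obtain ⟨x, hx, hq⟩ := bad m hm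
    rcases le_total (2 * m * qfm A x) (qfm C x) with h1 | h1
    · exact Or.inl ⟨x, hx, hq, by linarith⟩
    · exact Or.inr ⟨x, hx, hq, by linarith⟩
  · refine ⟨1 / (2 * K), by simp only [Set.mem_Ioi]; positivity, ?_⟩
    obtain ⟨x, hx, hq⟩ := bad (1 / (2 * K)) (by positivity)
    refine ⟨x, hx, hq, ?_⟩
    have := hKA x hx
    have e : 2 * (1 / (2 * K)) * qfm A x = qfm A x / K := by field_simp
    have : qfm A x / K < qfm C x := by rw [div_lt_iff₀ hK0]; linarith
    show 0 ≤ qfm C x - 2 * (1 / (2 * K)) * qfm A x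
    rw [e]; linarith
  · refine ⟨2 * K, by simp only [Set.mem_Ioi]; positivity, ?_⟩
    obtain ⟨x, hx, hq⟩ := bad (2 * K) (by positivity)
    refine ⟨x, hx, hq, ?_⟩
    have := hKB x hx
    show 0 ≤ 2 * (2 * K) * qfm A x - qfm C x
    by_contra hlt
    push Not at hlt
    nlinarith [mul_lt_mul_of_pos_left hlt hK0]

lemma posDef_iff_qfm {n : ℕ} (A : Matrix (Fin n) (Fin n) ℝ) (hA : A.IsSymm) :
    A.PosDef ↔ ∀ x, x ≠ 0 → 0 < qfm A x := by
  rw [posDef_iff_dotProduct_mulVec]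
  unfold qfm
  constructor
  · intro h x hx
    simpa using h.2 hx
  · intro h
    refine ⟨by rw [IsHermitian, conjTranspose_eq_transpose_of_trivial, hA.eq], ?_⟩
    intro x hx
    simpa using h x hx

/-- worst-case perturbation -/
lemma worst {p q : ℕ} (S : Matrix (Fin q) (Fin q) ℝ) (hS : S.IsSymm) (hP : S.PosSemidef)
    (u : Fin p → ℝ) (w : Fin q → ℝ) (ha : 0 < u ⬝ᵥ u) (hb : 0 < qfm S w) :
    ∃ D : Matrix (Fin p) (Fin q) ℝ, (S - Dᵀ * D).PosSemidef ∧
      u ⬝ᵥ (D *ᵥ w) = Real.sqrt ((u ⬝ᵥ u) * qfm S w) := by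
  set a := u ⬝ᵥ u with hadef
  set b := qfm S w with hbdef
  have hab : 0 < a * b := mul_pos ha hb
  set s := Real.sqrt (a * b) with hs
  have hs0 : 0 < s := Real.sqrt_pos.2 hab
  have hss : s ^ 2 = a * b := Real.sq_sqrt hab.le
  have hD : ∀ v, (s⁻¹ • vecMulVec u (S *ᵥ w)) *ᵥ v = (s⁻¹ * ((S *ᵥ w) ⬝ᵥ v)) • u := by
    intro v
    ext i
    simp [smul_mulVec, vecMulVec_mulVec]
    ring
  refine ⟨s⁻¹ • vecMulVec u (S *ᵥ w), ?_, ?_⟩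
  · rw [posSemidef_iff_dotProduct_mulVec]
    refine ⟨?_, ?_⟩
    · rw [IsHermitian, conjTranspose_eq_transpose_of_trivial, transpose_sub, transpose_mul,
        transpose_transpose, hS.eq]
    · intro v
      rw [star_trivial, sub_mulVec, dotProduct_sub, ← mulVec_mulVec,
        dotProduct_mulVec v (_ᵀ), vecMul_transpose, hD, smul_dotProduct, dotProduct_smul,
        ← hadef, smul_eq_mul, smul_eq_mul]
      set g := (S *ᵥ w) ⬝ᵥ v with hg
      have g1 : v ⬝ᵥ (S *ᵥ w) = g := dotProduct_comm _ _
      have g2 : w ⬝ᵥ (S *ᵥ v) = g := by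
        rw [dotProduct_mulVec, ← mulVec_transpose, hS.eq]
      have h0 : 0 ≤ qfm S (b • v + (-g) • w) := by
        have := (posSemidef_iff_dotProduct_mulVec.1 hP).2 (b • v + (-g) • w)
        simpa [qfm] using this
      rw [qfm_expand, g1, g2, ← hbdef] at h0
      change 0 ≤ qfm S v - _
      have h1 : 0 ≤ b * (b * qfm S v - g ^ 2) := by linarith
      have h2 : 0 ≤ b * qfm S v - g ^ 2 := nonneg_of_mul_nonneg_right h1 hb
      have h3 : s⁻¹ * g * (s⁻¹ * g * a) = g ^ 2 / b := by
        have : s⁻¹ * g * (s⁻¹ * g * a) = g ^ 2 * a / s ^ 2 := by field_simp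
        rw [this, hss]; field_simp
      rw [h3, sub_nonneg, div_le_iff₀ hb]
      linarith
  · rw [hD, dotProduct_smul, ← hadef, dotProduct_comm]
    change s⁻¹ * b * a = s
    field_simp
    linarith

/-- **Petersen's lemma (strict version).**
`𝐂 + 𝐌𝐃𝐍ᵀ + 𝐍𝐃ᵀ𝐌ᵀ ≺ 0` for every `𝐃` with `𝐃ᵀ𝐃 ⪯ 𝐃̄` iff there is `μ > 0` with
`𝐂 + μ𝐌𝐌ᵀ + μ⁻¹𝐍𝐃̄𝐍ᵀ ≺ 0`. -/
theorem petersen_lemma_strict {n p q : ℕ}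
    (C : Matrix (Fin n) (Fin n) ℝ) (M : Matrix (Fin n) (Fin p) ℝ)
    (Dbar : Matrix (Fin q) (Fin q) ℝ) (Nm : Matrix (Fin n) (Fin q) ℝ)
    (hC : C.IsSymm) (hDbar : Dbar.IsSymm) (hDbarPSD : Dbar.PosSemidef) :
    (∀ D : Matrix (Fin p) (Fin q) ℝ, (Dbar - Dᵀ * D).PosSemidef →
        (-(C + M * D * Nmᵀ + Nm * Dᵀ * Mᵀ)).PosDef) ↔
      (∃ μ : ℝ, 0 < μ ∧
        (-(C + μ • (M * Mᵀ) + μ⁻¹ • (Nm * Dbar * Nmᵀ))).PosDef) := by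
  have qA : ∀ x, qfm (M * Mᵀ) x = (Mᵀ *ᵥ x) ⬝ᵥ (Mᵀ *ᵥ x) := by
    intro x
    rw [qfm, ← mulVec_mulVec, dotProduct_mulVec, ← mulVec_transpose]
  have qB : ∀ x, qfm (Nm * Dbar * Nmᵀ) x = qfm Dbar (Nmᵀ *ᵥ x) := by
    intro x
    rw [qfm, ← mulVec_mulVec, ← mulVec_mulVec, dotProduct_mulVec, ← mulVec_transpose, qfm]
  have qD : ∀ D : Matrix (Fin p) (Fin q) ℝ, ∀ x,
      qfm (M * D * Nmᵀ) x = (Mᵀ *ᵥ x) ⬝ᵥ (D *ᵥ (Nmᵀ *ᵥ x)) := by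
    intro D x
    rw [qfm, ← mulVec_mulVec, ← mulVec_mulVec, dotProduct_mulVec, ← mulVec_transpose]
  have qT : ∀ X : Matrix (Fin n) (Fin n) ℝ, ∀ x, qfm Xᵀ x = qfm X x := by
    intro X x
    rw [qfm, mulVec_transpose, dotProduct_comm, ← dotProduct_mulVec, qfm]
  have qadd : ∀ X Y : Matrix (Fin n) (Fin n) ℝ, ∀ x, qfm (X + Y) x = qfm X x + qfm Y x := by
    intro X Y x; simp [qfm, add_mulVec]
  have qneg : ∀ X : Matrix (Fin n) (Fin n) ℝ, ∀ x, qfm (-X) x = - qfm X x := by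
    intro X x; simp [qfm, neg_mulVec]
  have qsm : ∀ (r : ℝ) (X : Matrix (Fin n) (Fin n) ℝ), ∀ x, qfm (r • X) x = r * qfm X x := by
    intro r X x; simp [qfm, smul_mulVec]
  have tr : ∀ D : Matrix (Fin p) (Fin q) ℝ, Nm * Dᵀ * Mᵀ = (M * D * Nmᵀ)ᵀ := by
    intro D; simp [transpose_mul, Matrix.mul_assoc]
  have sym1 : ∀ D : Matrix (Fin p) (Fin q) ℝ, (-(C + M * D * Nmᵀ + Nm * Dᵀ * Mᵀ)).IsSymm := by
    intro D
    rw [tr, IsSymm, transpose_neg, transpose_add, transpose_add, transpose_transpose, hC.eq]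
    abel
  have sym2 : ∀ μ : ℝ, (-(C + μ • (M * Mᵀ) + μ⁻¹ • (Nm * Dbar * Nmᵀ))).IsSymm := by
    intro μ
    simp [IsSymm, transpose_mul, hC.eq, hDbar.eq, Matrix.mul_assoc]
  have hS : ∀ w, 0 ≤ qfm Dbar w := by
    intro w
    have := (posSemidef_iff_dotProduct_mulVec.1 hDbarPSD).2 w
    simpa [qfm] using this
  constructor
  · intro H
    have H' : ∀ D : Matrix (Fin p) (Fin q) ℝ, (Dbar - Dᵀ * D).PosSemidef → ∀ x, x ≠ 0 →
        2 * ((Mᵀ *ᵥ x) ⬝ᵥ (D *ᵥ (Nmᵀ *ᵥ x))) < qfm (-C) x := by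
      intro D hD x hx
      have := (posDef_iff_qfm _ (sym1 D)).1 (H D hD) x hx
      rw [tr, qneg, qadd, qadd, qT, qD] at this
      rw [qneg]; linarith
    have hnn : ∀ x, 0 ≤ qfm (M * Mᵀ) x := by
      intro x; rw [qA]; exact Finset.sum_nonneg (fun i _ => mul_self_nonneg _)
    obtain ⟨m, hm, hq⟩ := key_lemma (M * Mᵀ) (Nm * Dbar * Nmᵀ) (-C) hnn (by
      intro x hx
      have hc : 0 < qfm (-C) x := by
        have := H' 0 (by simpa using hDbarPSD) x hx
        simpa using this
      refine ⟨hc, ?_⟩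
      rcases eq_or_lt_of_le (hnn x) with ha | ha
      · rw [← ha]; simp only [mul_zero, zero_mul]; positivity
      have hb0 : 0 ≤ qfm (Nm * Dbar * Nmᵀ) x := by rw [qB]; exact hS _
      rcases eq_or_lt_of_le hb0 with hb | hb
      · rw [← hb]; simp only [mul_zero]; positivity
      rw [qA] at ha ⊢
      rw [qB] at hb ⊢
      obtain ⟨D, hD, hDe⟩ := worst Dbar hDbar hDbarPSD _ _ ha hb
      have h1 := H' D hD x hx
      rw [hDe] at h1
      have h2 := Real.sq_sqrt (mul_pos ha hb).le
      have h3 := Real.sqrt_nonneg (((Mᵀ *ᵥ x) ⬝ᵥ (Mᵀ *ᵥ x)) * qfm Dbar (Nmᵀ *ᵥ x))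
      nlinarith)
    refine ⟨m, hm, (posDef_iff_qfm _ (sym2 m)).2 ?_⟩
    intro x hx
    have h1 := hq x hx
    rw [qneg] at h1
    rw [qneg, qadd, qadd, qsm, qsm]
    have h2 : m⁻¹ * (m ^ 2 * qfm (M * Mᵀ) x - m * -qfm C x + qfm (Nm * Dbar * Nmᵀ) x) < 0 :=
      mul_neg_of_pos_of_neg (inv_pos.2 hm) h1
    have h3 : m⁻¹ * (m ^ 2 * qfm (M * Mᵀ) x - m * -qfm C x + qfm (Nm * Dbar * Nmᵀ) x)
      = m * qfm (M * Mᵀ) x + qfm C x + m⁻¹ * qfm (Nm * Dbar * Nmᵀ) x := by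
      field_simp
      ring
    linarith
  · rintro ⟨m, hm, hP⟩ D hD
    rw [posDef_iff_qfm _ (sym1 D)]
    intro x hx
    have h1 := (posDef_iff_qfm _ (sym2 m)).1 hP x hx
    rw [qneg, qadd, qadd, qsm, qsm, qA, qB] at h1
    rw [tr, qneg, qadd, qadd, qT, qD]
    set u := Mᵀ *ᵥ x
    set w := Nmᵀ *ᵥ x
    have h2 : (D *ᵥ w) ⬝ᵥ (D *ᵥ w) ≤ qfm Dbar w := by
      have := (posSemidef_iff_dotProduct_mulVec.1 hD).2 w
      rw [star_trivial, sub_mulVec, dotProduct_sub, ← mulVec_mulVec,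
        dotProduct_mulVec w (_ᵀ), vecMul_transpose] at this
      unfold qfm; linarith
    have h3 : 0 ≤ (m • u - D *ᵥ w) ⬝ᵥ (m • u - D *ᵥ w) :=
      Finset.sum_nonneg (fun i _ => mul_self_nonneg _)
    simp only [dotProduct_sub, sub_dotProduct, smul_dotProduct, dotProduct_smul, smul_eq_mul,
      dotProduct_comm (D *ᵥ w) u] at h3
    have h4 : 0 ≤ m⁻¹ * (m * (m * (u ⬝ᵥ u)) - 2 * m * (u ⬝ᵥ (D *ᵥ w)) + qfm Dbar w) :=
      mul_nonneg (inv_pos.2 hm).le (by linarith)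
    have h5 : m⁻¹ * (m * (m * (u ⬝ᵥ u)) - 2 * m * (u ⬝ᵥ (D *ᵥ w)) + qfm Dbar w)
      = m * (u ⬝ᵥ u) - 2 * (u ⬝ᵥ (D *ᵥ w)) + m⁻¹ * qfm Dbar w := by
      field_simp
    linarith
end

section
/- Petersen's lemma (non-strict version): Let 𝐂 ∈ ℝ^{n×n} be symmetric, 𝐌 ∈ ℝ^{n×p} with 𝐌 ≠ 0, 𝐃̄ ∈ ℝ^{q×q} symmetric positive definite, and 𝐍 ∈ ℝ^{n×q} with 𝐍 ≠ 0. Then 𝐂 + 𝐌𝐃𝐍ᵀ + 𝐍𝐃ᵀ𝐌ᵀ ⪯ 0 holds for every 𝐃 ∈ ℝ^{p×q} with 𝐃ᵀ𝐃 ⪯ 𝐃̄ if and only if there exists a scalar μ > 0 such that 𝐂 + μ𝐌𝐌ᵀ + μ⁻¹𝐍𝐃̄𝐍ᵀ ⪯ 0. -/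
open Matrix


theorem pet_slemma {V : Type*} [AddCommGroup V] [Module ℝ V] (q0 q1 : V → ℝ)
    (h0 : ∀ z y, ∃ B, ∀ t : ℝ, q0 (z + t • y) = q0 z + 2 * t * B + t ^ 2 * q0 y)
    (h1 : ∀ z y, ∃ B, ∀ t : ℝ, q1 (z + t • y) = q1 z + 2 * t * B + t ^ 2 * q1 y)
    (h : ∀ z, 0 ≤ q1 z → q0 z ≤ 0) (z0 : V) (hz0 : 0 < q1 z0) :
    ∃ l : ℝ, 0 ≤ l ∧ ∀ z, q0 z + l * q1 z ≤ 0 := by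
  have key : ∀ z y, q1 z < 0 → 0 < q1 y → q0 z * q1 y ≤ q0 y * q1 z := by
    intro z y hz hy
    obtain ⟨B0, hB0⟩ := h0 z y
    obtain ⟨B1, hB1⟩ := h1 z y
    set a := q1 y
    set c := q1 z
    have hdisc : 0 < B1 ^ 2 - a * c := by nlinarith [mul_pos hy (neg_pos.2 hz), sq_nonneg B1]
    set s := Real.sqrt (B1 ^ 2 - a * c) with hs
    have hss : s ^ 2 = B1 ^ 2 - a * c := Real.sq_sqrt hdisc.le
    have hspos : 0 < s := Real.sqrt_pos.2 hdisc
    have hac : a * c < 0 := mul_neg_of_pos_of_neg hy hz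
    have hl : |B1| < s := by
      apply abs_lt_of_sq_lt_sq _ hspos.le
      linarith
    obtain ⟨hl1, hl2⟩ := abs_lt.1 hl
    have e1 : q0 z + 2 * ((-B1 - s) / a) * B0 + ((-B1 - s) / a) ^ 2 * q0 y ≤ 0 := by
      rw [← hB0]
      apply h
      rw [hB1]
      apply le_of_eq
      field_simp
      linear_combination (-1) * hss
    have e2 : q0 z + 2 * ((-B1 + s) / a) * B0 + ((-B1 + s) / a) ^ 2 * q0 y ≤ 0 := by
      rw [← hB0]
      apply h
      rw [hB1]
      apply le_of_eq
      field_simp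
      linear_combination (-1) * hss
    have w1 : 0 < -B1 + s := by linarith
    have w2 : 0 < B1 + s := by linarith
    have f1 := mul_nonpos_of_nonneg_of_nonpos w1.le e1
    have f2 := mul_nonpos_of_nonneg_of_nonpos w2.le e2
    have e3 : (-B1 + s) * (q0 z + 2 * ((-B1 - s) / a) * B0 + ((-B1 - s) / a) ^ 2 * q0 y)
        + (B1 + s) * (q0 z + 2 * ((-B1 + s) / a) * B0 + ((-B1 + s) / a) ^ 2 * q0 y)
        = (2 * s / a) * (q0 z * a - q0 y * c) := by
      field_simp
      linear_combination (2 * s * q0 y) * hss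
    have e4 : (2 * s / a) * (q0 z * a - q0 y * c) ≤ 0 := by rw [← e3]; linarith
    have : 0 < 2 * s / a := by positivity
    by_contra hcon
    push Not at hcon
    have := mul_pos this (sub_pos.2 hcon)
    linarith
  let S : Set ℝ := {r | ∃ y, 0 < q1 y ∧ r = -q0 y / q1 y}
  have hne : S.Nonempty := ⟨_, z0, hz0, rfl⟩
  have hS0 : ∀ r ∈ S, 0 ≤ r := by
    rintro r ⟨y, hy, rfl⟩
    have := h y hy.le
    exact div_nonneg (by linarith) hy.le
  have hbdd : BddBelow S := ⟨0, hS0⟩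
  refine ⟨sInf S, le_csInf hne hS0, fun z => ?_⟩
  rcases lt_trichotomy (q1 z) 0 with hz | hz | hz
  · have : q0 z / (-q1 z) ≤ sInf S := by
      apply le_csInf hne
      rintro r ⟨y, hy, rfl⟩
      rw [div_le_div_iff₀ (by linarith) hy]
      have := key z y hz hy
      linarith
    rw [div_le_iff₀ (by linarith)] at this
    linarith
  · rw [hz, mul_zero, add_zero]
    exact h z hz.ge
  · have : sInf S ≤ -q0 z / q1 z := csInf_le hbdd ⟨z, hz, rfl⟩
    rw [le_div_iff₀ hz] at this
    linarith

theorem pet_psd {m : ℕ} (A : Matrix (Fin m) (Fin m) ℝ) :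
    A.PosSemidef ↔ A.IsSymm ∧ ∀ x, 0 ≤ x ⬝ᵥ A *ᵥ x := by
  rw [posSemidef_iff_dotProduct_mulVec]
  simp [IsHermitian, IsSymm]

theorem pet_quad {m : ℕ} (A : Matrix (Fin m) (Fin m) ℝ) (x y : Fin m → ℝ) (t : ℝ) :
    (x + t • y) ⬝ᵥ A *ᵥ (x + t • y) = x ⬝ᵥ A *ᵥ x +
      2 * t * ((x ⬝ᵥ A *ᵥ y + y ⬝ᵥ A *ᵥ x) / 2) + t ^ 2 * (y ⬝ᵥ A *ᵥ y) := by
  simp only [mulVec_add, mulVec_smul, add_dotProduct, dotProduct_add, smul_dotProduct,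
    dotProduct_smul, smul_eq_mul]
  ring

theorem pet_tr {m k : ℕ} (A : Matrix (Fin m) (Fin k) ℝ) (x : Fin m → ℝ) (y : Fin k → ℝ) :
    x ⬝ᵥ A *ᵥ y = (Aᵀ *ᵥ x) ⬝ᵥ y := by
  rw [dotProduct_mulVec, mulVec_transpose]

theorem pet_exists {p q : ℕ} (E : Matrix (Fin q) (Fin q) ℝ) (hE : E.PosDef) (v : Fin q → ℝ)
    (w : Fin p → ℝ) (hw : w ⬝ᵥ w ≤ v ⬝ᵥ E *ᵥ v) :
    ∃ D : Matrix (Fin p) (Fin q) ℝ, (E - Dᵀ * D).PosSemidef ∧ D *ᵥ v = w := by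
  have hps := (pet_psd E).1 hE.posSemidef
  obtain ⟨hsym, hnn⟩ := hps
  by_cases hv : v = 0
  · subst hv
    have hw0 : w = 0 := by
      rw [← dotProduct_self_eq_zero]
      apply le_antisymm (by simpa using hw)
      exact Finset.sum_nonneg fun i _ => mul_self_nonneg _
    exact ⟨0, by simpa using hE.posSemidef, by simp [hw0]⟩
  have hb : 0 < v ⬝ᵥ E *ᵥ v := by simpa using hE.dotProduct_mulVec_pos hv
  set b := v ⬝ᵥ E *ᵥ v
  have hsw : ∀ y, y ⬝ᵥ E *ᵥ v = v ⬝ᵥ E *ᵥ y := by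
    intro y
    rw [pet_tr, hsym.eq, dotProduct_comm]
  have hD : ∀ y, (b⁻¹ • vecMulVec w (E *ᵥ v)) *ᵥ y = (b⁻¹ * (v ⬝ᵥ E *ᵥ y)) • w := by
    intro y
    rw [smul_mulVec, vecMulVec_mulVec, dotProduct_comm, hsw]
    ext i
    simp
    ring
  refine ⟨b⁻¹ • vecMulVec w (E *ᵥ v), ?_, ?_⟩
  · rw [pet_psd]
    refine ⟨hsym.sub (by rw [IsSymm, transpose_mul, transpose_transpose]), fun y => ?_⟩
    rw [sub_mulVec, dotProduct_sub, ← mulVec_mulVec, pet_tr, pet_tr, transpose_transpose, hD,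
      hsym.eq, smul_dotProduct, dotProduct_smul, smul_eq_mul, smul_eq_mul, dotProduct_comm]
    have h1 := hnn (y + (-(b⁻¹ * (v ⬝ᵥ E *ᵥ y))) • v)
    rw [pet_quad, hsw] at h1
    set g := v ⬝ᵥ E *ᵥ y
    change 0 ≤ _ + _ + _ * b at h1
    have h2 : (b⁻¹ * g) * (b⁻¹ * g) * (w ⬝ᵥ w) ≤ (b⁻¹ * g) * (b⁻¹ * g) * b :=
      mul_le_mul_of_nonneg_left hw (mul_self_nonneg _)
    have h3 : (b⁻¹ * g) * (b⁻¹ * g) * b = b⁻¹ * g * g := by field_simp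
    nlinarith
  · rw [hD]
    change (b⁻¹ * b) • w = w
    rw [inv_mul_cancel₀ hb.ne', one_smul]

theorem pet_form {n p q : ℕ} (C : Matrix (Fin n) (Fin n) ℝ) (M : Matrix (Fin n) (Fin p) ℝ)
    (Nm : Matrix (Fin n) (Fin q) ℝ) (D : Matrix (Fin p) (Fin q) ℝ) (x : Fin n → ℝ) :
    x ⬝ᵥ (-(C + M * D * Nmᵀ + Nm * Dᵀ * Mᵀ)) *ᵥ x =
      -(x ⬝ᵥ C *ᵥ x + 2 * ((D *ᵥ (Nmᵀ *ᵥ x)) ⬝ᵥ (Mᵀ *ᵥ x))) := by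
  simp only [neg_mulVec, add_mulVec, dotProduct_neg, dotProduct_add, ← mulVec_mulVec]
  rw [pet_tr M, pet_tr Nm, pet_tr Dᵀ, transpose_transpose,
    dotProduct_comm (Mᵀ *ᵥ x)]
  ring

theorem pet_form2 {n p q : ℕ} (C : Matrix (Fin n) (Fin n) ℝ) (M : Matrix (Fin n) (Fin p) ℝ)
    (Nm : Matrix (Fin n) (Fin q) ℝ) (E : Matrix (Fin q) (Fin q) ℝ) (a b : ℝ) (x : Fin n → ℝ) :
    x ⬝ᵥ (-(C + a • (M * Mᵀ) + b • (Nm * E * Nmᵀ))) *ᵥ x =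
      -(x ⬝ᵥ C *ᵥ x + a * ((Mᵀ *ᵥ x) ⬝ᵥ (Mᵀ *ᵥ x))
        + b * ((Nmᵀ *ᵥ x) ⬝ᵥ E *ᵥ (Nmᵀ *ᵥ x))) := by
  simp only [neg_mulVec, add_mulVec, smul_mulVec, dotProduct_neg, dotProduct_add, dotProduct_smul,
    ← mulVec_mulVec, smul_eq_mul]
  rw [pet_tr M, pet_tr Nm]

theorem pet_ne {n p : ℕ} (M : Matrix (Fin n) (Fin p) ℝ) (hM : M ≠ 0) : ∃ x, Mᵀ *ᵥ x ≠ 0 := by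
  by_contra! hcon
  apply hM
  have : Mᵀ = 0 := by
    apply Matrix.mulVec_injective
    funext x
    simp [hcon x]
  simpa using this

/-- **Petersen's lemma (non-strict version).**
For `𝐌 ≠ 0`, `𝐍 ≠ 0` and `𝐃̄ ≻ 0`: `𝐂 + 𝐌𝐃𝐍ᵀ + 𝐍𝐃ᵀ𝐌ᵀ ⪯ 0` for every `𝐃` with
`𝐃ᵀ𝐃 ⪯ 𝐃̄` iff there is `μ > 0` with `𝐂 + μ𝐌𝐌ᵀ + μ⁻¹𝐍𝐃̄𝐍ᵀ ⪯ 0`. -/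
theorem petersen_lemma_nonstrict {n p q : ℕ}
    (C : Matrix (Fin n) (Fin n) ℝ) (M : Matrix (Fin n) (Fin p) ℝ)
    (Dbar : Matrix (Fin q) (Fin q) ℝ) (Nm : Matrix (Fin n) (Fin q) ℝ)
    (hC : C.IsSymm) (hM : M ≠ 0) (hDbar : Dbar.IsSymm) (hDbarPD : Dbar.PosDef)
    (hN : Nm ≠ 0) :
    (∀ D : Matrix (Fin p) (Fin q) ℝ, (Dbar - Dᵀ * D).PosSemidef →
        (-(C + M * D * Nmᵀ + Nm * Dᵀ * Mᵀ)).PosSemidef) ↔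
      (∃ μ : ℝ, 0 < μ ∧
        (-(C + μ • (M * Mᵀ) + μ⁻¹ • (Nm * Dbar * Nmᵀ))).PosSemidef) := by
  constructor
  · intro h
    let q0 : (Fin n → ℝ) × (Fin p → ℝ) → ℝ := fun z =>
      z.1 ⬝ᵥ C *ᵥ z.1 + 2 * (z.2 ⬝ᵥ (Mᵀ *ᵥ z.1))
    let q1 : (Fin n → ℝ) × (Fin p → ℝ) → ℝ := fun z =>
      (Nmᵀ *ᵥ z.1) ⬝ᵥ Dbar *ᵥ (Nmᵀ *ᵥ z.1) - z.2 ⬝ᵥ z.2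
    obtain ⟨x0, hx0⟩ := pet_ne Nm hN
    obtain ⟨x1, hx1⟩ := pet_ne M hM
    obtain ⟨l, hl, hlz⟩ := pet_slemma q0 q1
      (by
        rintro ⟨x, w⟩ ⟨y, u⟩
        refine ⟨(x ⬝ᵥ C *ᵥ y + y ⬝ᵥ C *ᵥ x) / 2 + (w ⬝ᵥ (Mᵀ *ᵥ y) + u ⬝ᵥ (Mᵀ *ᵥ x)), fun t => ?_⟩
        simp only [q0, Prod.smul_mk, Prod.mk_add_mk, pet_quad]
        simp only [mulVec_add, mulVec_smul, add_dotProduct, dotProduct_add, smul_dotProduct,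
          dotProduct_smul, smul_eq_mul]
        ring)
      (by
        rintro ⟨x, w⟩ ⟨y, u⟩
        refine ⟨((Nmᵀ *ᵥ x) ⬝ᵥ Dbar *ᵥ (Nmᵀ *ᵥ y) + (Nmᵀ *ᵥ y) ⬝ᵥ Dbar *ᵥ (Nmᵀ *ᵥ x)) / 2
          - (w ⬝ᵥ u + u ⬝ᵥ w) / 2, fun t => ?_⟩
        simp only [q1, Prod.smul_mk, Prod.mk_add_mk, mulVec_add, mulVec_smul, add_dotProduct,
          dotProduct_add, smul_dotProduct, dotProduct_smul, smul_eq_mul]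
        ring)
      (by
        rintro ⟨x, w⟩ hz
        obtain ⟨D, hD, hDw⟩ := pet_exists Dbar hDbarPD (Nmᵀ *ᵥ x) w (sub_nonneg.1 hz)
        have := ((pet_psd _).1 (h D hD)).2 x
        rw [pet_form, hDw] at this
        simp only [q0]
        linarith)
      (x0, 0)
      (by
        have := hDbarPD.dotProduct_mulVec_pos hx0
        simpa [q1] using this)
    have hl' : 0 < l := by
      rcases hl.lt_or_eq with h' | h'
      · exact h'
      exfalso
      subst h'
      have ha : 0 < (Mᵀ *ᵥ x1) ⬝ᵥ (Mᵀ *ᵥ x1) := by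
        apply lt_of_le_of_ne
        · exact Finset.sum_nonneg fun i _ => mul_self_nonneg _
        · exact fun hh => hx1 (dotProduct_self_eq_zero.1 hh.symm)
      set a := (Mᵀ *ᵥ x1) ⬝ᵥ (Mᵀ *ᵥ x1) with hadef
      have h2 := hlz (x1, ((1 - x1 ⬝ᵥ C *ᵥ x1) / (2 * a)) • (Mᵀ *ᵥ x1))
      simp only [q0, smul_dotProduct, smul_eq_mul, ← hadef, zero_mul, add_zero] at h2
      have h3 : 2 * ((1 - x1 ⬝ᵥ C *ᵥ x1) / (2 * a) * a) = 1 - x1 ⬝ᵥ C *ᵥ x1 := by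
        field_simp
      linarith
    refine ⟨l⁻¹, inv_pos.2 hl', ?_⟩
    rw [pet_psd]
    refine ⟨?_, fun x => ?_⟩
    · simp only [IsSymm, transpose_neg, transpose_add, transpose_smul, transpose_mul,
        transpose_transpose, hC.eq, hDbar.eq, Matrix.mul_assoc]
    · rw [pet_form2, inv_inv]
      have h2 := hlz (x, l⁻¹ • (Mᵀ *ᵥ x))
      simp only [q0, q1, smul_dotProduct, dotProduct_smul, smul_eq_mul] at h2
      set a := (Mᵀ *ᵥ x) ⬝ᵥ (Mᵀ *ᵥ x)
      have h3 : l * (l⁻¹ * (l⁻¹ * a)) = l⁻¹ * a := by field_simp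
      linarith
  · rintro ⟨μ, hμ, h⟩ D hD
    rw [pet_psd] at h hD ⊢
    refine ⟨?_, fun x => ?_⟩
    · simp only [IsSymm, transpose_neg, transpose_add, transpose_mul,
        transpose_transpose, hC.eq, Matrix.mul_assoc]
      rw [add_right_comm]
    · have h1 := h.2 x
      have h2 := hD.2 (Nmᵀ *ᵥ x)
      rw [pet_form2] at h1
      rw [pet_form]
      rw [sub_mulVec, dotProduct_sub, ← mulVec_mulVec, pet_tr Dᵀ, transpose_transpose] at h2
      set v := Nmᵀ *ᵥ x
      set u := Mᵀ *ᵥ x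
      set d := D *ᵥ v
      have h3 : 0 ≤ (d - μ • u) ⬝ᵥ (d - μ • u) :=
        Finset.sum_nonneg fun i _ => mul_self_nonneg _
      simp only [sub_dotProduct, dotProduct_sub, smul_dotProduct, dotProduct_smul,
        smul_eq_mul, dotProduct_comm u d] at h3
      have h4 := mul_nonneg (inv_pos.2 hμ).le h3
      have h5 := mul_nonneg (inv_pos.2 hμ).le h2
      have h6 : μ⁻¹ * (d ⬝ᵥ d - μ * d ⬝ᵥ u - μ * (d ⬝ᵥ u - μ * u ⬝ᵥ u)) =
          μ⁻¹ * (d ⬝ᵥ d) - 2 * (d ⬝ᵥ u) + μ * (u ⬝ᵥ u) := by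
        field_simp
        ring
      linarith
end

section
/- Quadratic-form characterization of the set of bilinear systems consistent with noisy data: let Z₀ ∈ ℝ^{N×T}, U₀ ∈ ℝ^{1×T}, V₀ ∈ ℝ^{N×T}, Z₁ ∈ ℝ^{N×T}, Δ ∈ ℝ^{N×N}, let W₀ ∈ ℝ^{(2N+1)×T} be the vertical stack of Z₀, U₀, V₀, and set 𝐀 = W₀W₀ᵀ, 𝐁 = −W₀Z₁ᵀ, 𝐂 = Z₁Z₁ᵀ − ΔΔᵀ. Then for any 𝐙 ∈ ℝ^{(2N+1)×N}, there exists a disturbance matrix D₀ ∈ ℝ^{N×T} with D₀D₀ᵀ ⪯ ΔΔᵀ and Z₁ = 𝐙ᵀW₀ + D₀ if and only if 𝐙ᵀ𝐀𝐙 + 𝐙ᵀ𝐁 + 𝐁ᵀ𝐙 + 𝐂 ⪯ 0. -/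
open Matrix

/-- **Quadratic-form characterization of the set of bilinear systems consistent with
noisy data.**  With `W₀` the vertical stack of `Z₀, U₀, V₀`, `𝐀 = W₀W₀ᵀ`,
`𝐁 = −W₀Z₁ᵀ`, `𝐂 = Z₁Z₁ᵀ − ΔΔᵀ`, a matrix `𝐙` admits a disturbance `D₀` with
`D₀D₀ᵀ ⪯ ΔΔᵀ` and `Z₁ = 𝐙ᵀW₀ + D₀` iff `𝐙ᵀ𝐀𝐙 + 𝐙ᵀ𝐁 + 𝐁ᵀ𝐙 + 𝐂 ⪯ 0`. -/
theorem consistency_set_quadratic_form {N T : ℕ} (hN : 0 < N) (hT : 0 < T)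
    (Z₀ : Matrix (Fin N) (Fin T) ℝ) (U₀ : Matrix (Fin 1) (Fin T) ℝ)
    (V₀ : Matrix (Fin N) (Fin T) ℝ) (Z₁ : Matrix (Fin N) (Fin T) ℝ)
    (Δ : Matrix (Fin N) (Fin N) ℝ)
    (W₀ : Matrix (Fin N ⊕ (Fin 1 ⊕ Fin N)) (Fin T) ℝ)
    (hW₀ : W₀ = fromRows Z₀ (fromRows U₀ V₀))
    (mA : Matrix (Fin N ⊕ (Fin 1 ⊕ Fin N)) (Fin N ⊕ (Fin 1 ⊕ Fin N)) ℝ)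
    (hA : mA = W₀ * W₀ᵀ)
    (mB : Matrix (Fin N ⊕ (Fin 1 ⊕ Fin N)) (Fin N) ℝ)
    (hB : mB = -(W₀ * Z₁ᵀ))
    (mC : Matrix (Fin N) (Fin N) ℝ)
    (hC : mC = Z₁ * Z₁ᵀ - Δ * Δᵀ)
    (mZ : Matrix (Fin N ⊕ (Fin 1 ⊕ Fin N)) (Fin N) ℝ) :
    (∃ D₀ : Matrix (Fin N) (Fin T) ℝ,
        (Δ * Δᵀ - D₀ * D₀ᵀ).PosSemidef ∧ Z₁ = mZᵀ * W₀ + D₀) ↔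
      (-(mZᵀ * mA * mZ + mZᵀ * mB + mBᵀ * mZ + mC)).PosSemidef := by
  have key : -(mZᵀ * mA * mZ + mZᵀ * mB + mBᵀ * mZ + mC)
      = Δ * Δᵀ - (Z₁ - mZᵀ * W₀) * (Z₁ - mZᵀ * W₀)ᵀ := by
    subst hA hB hC
    simp only [transpose_sub, transpose_mul, transpose_neg, transpose_transpose,
      Matrix.mul_sub, Matrix.sub_mul, Matrix.mul_neg, Matrix.neg_mul, Matrix.mul_assoc]
    abel
  rw [key]
  constructor
  · rintro ⟨D, hD, h⟩
    have hD' : Z₁ - mZᵀ * W₀ = D := by rw [h]; abel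
    rwa [hD']
  · intro h
    exact ⟨_, h, by abel⟩
end
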